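/- Mellin transforms of the weight-one harmonic polylogarithms: for every n ∈ ℕ, (1) ∫_0^1 x^n · log x dx = −1/(n+1)²; (2) ∫_0^1 x^n · (−log(1−x)) dx = S_1(n+1)/(n+1), where S_1(m) = Σ_{i=1}^m 1/i; (3) ∫_0^1 x^n · log(1+x) dx = (−1)^n · S_{−1}(n+1)/(n+1) + (1 + (−1)^n) · log 2/(n+1), where S_{−1}(m) = Σ_{i=1}^m (−1)^i/i. -/

import Mathlib

/-!
Every factor `log x`, `log (1 - x)`, `log (1 + x)` is `log |x - c|` for `c = 0, 1, -1`, and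
`Real.log` is even, so all three are `Real.log (x - c)`. Integrate `x ^ n * log (x - c)` by parts
with the antiderivative of `x ^ n` that vanishes at `c`: the zero cancels the logarithmic
singularity, and `(x ^ (n + 1) - c ^ (n + 1)) / (x - c)` is a polynomial, whose integral is the
harmonic sum.
-/

section LogIntegrals

open MeasureTheory Set
open scoped Interval

theorem continuous_sub_mul_log_sub (c : ℝ) :
    Continuous fun x : ℝ => (x - c) * Real.log (x - c) :=
  Real.continuous_mul_log.comp (continuous_sub_right c)

theorem intervalIntegrable_log_sub (a b c : ℝ) :
    IntervalIntegrable (fun x => Real.log (x - c)) volume a b := by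
  simpa only [sub_add_cancel] using
    (intervalIntegral.intervalIntegrable_log' (a := a - c) (b := b - c)).comp_sub_right c

theorem integral_deriv_mul_log_sub {f f' g : ℝ → ℝ} {a b c : ℝ}
    (hfg : ∀ x ∈ [[a, b]], f x = (x - c) * g x)
    (hf : ∀ x ∈ Ioo (min a b) (max a b) \ {c}, HasDerivAt f (f' x) x)
    (hf' : ContinuousOn f' [[a, b]]) (hg : ContinuousOn g [[a, b]]) :
    ∫ x in a..b, f' x * Real.log (x - c) =
      f b * Real.log (b - c) - f a * Real.log (a - c) - ∫ x in a..b, g x := by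
  have hlog : IntervalIntegrable (fun x => f' x * Real.log (x - c)) volume a b :=
    (intervalIntegrable_log_sub a b c).continuousOn_mul hf'
  have hcont : ContinuousOn (fun x => f x * Real.log (x - c)) [[a, b]] := by
    refine (hg.fun_mul (continuous_sub_mul_log_sub c).continuousOn).congr fun x hx => ?_
    simp only [hfg x hx]
    ring
  have hderiv : ∀ x ∈ Ioo (min a b) (max a b) \ {c},
      HasDerivAt (fun x => f x * Real.log (x - c)) (f' x * Real.log (x - c) + g x) x := by
    intro x hx
    have hxc : x - c ≠ 0 := sub_ne_zero.mpr hx.2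
    have hfx : f x / (x - c) = g x := by
      rw [hfg x (Ioo_subset_Icc_self hx.1), mul_div_cancel_left₀ _ hxc]
    simpa only [id, mul_one_div, hfx] using
      (hf x hx).fun_mul (((hasDerivAt_id x).sub_const c).log hxc)
  have hparts := integral_eq_of_hasDerivAt_off_countable _ _ (countable_singleton c)
    hcont hderiv (hlog.add hg.intervalIntegrable)
  rw [intervalIntegral.integral_add hlog hg.intervalIntegrable] at hparts
  exact eq_sub_of_add_eq hparts

theorem integral_geom_sum₂ (m : ℕ) (a b c : ℝ) :
    ∫ x in a..b, ∑ i ∈ Finset.range m, x ^ i * c ^ (m - 1 - i) =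
      ∑ i ∈ Finset.Icc 1 m, c ^ (m - i) * (b ^ i - a ^ i) / i := by
  rw [intervalIntegral.integral_finsetSum fun i _ =>
    Continuous.intervalIntegrable (by fun_prop) a b, Finset.range_eq_Ico,
    ← Finset.Ico_add_one_right_eq_Icc, ← Finset.sum_Ico_add' _ 0 m 1]
  refine Finset.sum_congr rfl fun i _ => ?_
  rw [intervalIntegral.integral_mul_const, integral_pow, Nat.sub_sub, add_comm 1 i]
  push_cast
  ring

theorem integral_pow_mul_log_sub (n : ℕ) (a b c : ℝ) :
    ∫ x in a..b, x ^ n * Real.log (x - c) =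
      ((b ^ (n + 1) - c ^ (n + 1)) * Real.log (b - c) -
        (a ^ (n + 1) - c ^ (n + 1)) * Real.log (a - c) -
        ∑ i ∈ Finset.Icc 1 (n + 1), c ^ (n + 1 - i) * (b ^ i - a ^ i) / i) / (n + 1) := by
  have hderiv (x : ℝ) :
      HasDerivAt (fun x => x ^ (n + 1) - c ^ (n + 1)) (((n : ℝ) + 1) * x ^ n) x := by
    simpa using (hasDerivAt_pow (n + 1) x).sub_const (c ^ (n + 1))
  have hparts := integral_deriv_mul_log_sub (a := a) (b := b) (c := c)
    (g := fun x => ∑ i ∈ Finset.range (n + 1), x ^ i * c ^ (n + 1 - 1 - i))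
    (fun x _ => by rw [mul_comm, (Commute.all x c).geom_sum₂_mul]) (fun x _ => hderiv x)
    (by fun_prop) (by fun_prop)
  simp only [mul_assoc, intervalIntegral.integral_const_mul] at hparts
  rw [eq_div_iff n.cast_add_one_ne_zero, mul_comm, hparts, integral_geom_sum₂]

theorem integral_zero_one_pow_mul_log_sub (n : ℕ) (c : ℝ) :
    ∫ x in (0 : ℝ)..1, x ^ n * Real.log (x - c) =
      ((1 - c ^ (n + 1)) * Real.log (1 - c) + c ^ (n + 1) * Real.log c -
        ∑ i ∈ Finset.Icc 1 (n + 1), c ^ (n + 1 - i) / i) / (n + 1) := by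
  have hsum : ∑ i ∈ Finset.Icc 1 (n + 1), c ^ (n + 1 - i) * ((1 : ℝ) ^ i - 0 ^ i) / i =
      ∑ i ∈ Finset.Icc 1 (n + 1), c ^ (n + 1 - i) / i := by
    refine Finset.sum_congr rfl fun i hi => ?_
    rw [one_pow, zero_pow (by grind), sub_zero, mul_one]
  rw [integral_pow_mul_log_sub, hsum, zero_sub, Real.log_neg_eq_log, one_pow,
    zero_pow n.succ_ne_zero]
  ring

theorem integral_zero_one_pow_mul_log (n : ℕ) :
    ∫ x in (0 : ℝ)..1, x ^ n * Real.log x = -(1 / ((n : ℝ) + 1) ^ 2) := by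
  have hsum : ∑ i ∈ Finset.Icc 1 (n + 1), (0 : ℝ) ^ (n + 1 - i) / i = 1 / (n + 1) := by
    rw [Finset.sum_Icc_succ_top (by lia), Finset.sum_eq_zero fun i hi => ?_]
    · simp
    · rw [zero_pow (by grind), zero_div]
  have h := integral_zero_one_pow_mul_log_sub n 0
  simp only [sub_zero, hsum, Real.log_one, Real.log_zero, mul_zero] at h
  rw [h]
  field_simp
  ring

theorem integral_zero_one_pow_mul_neg_log_one_sub (n : ℕ) :
    ∫ x in (0 : ℝ)..1, x ^ n * (-Real.log (1 - x)) =
      (∑ i ∈ Finset.Icc 1 (n + 1), 1 / (i : ℝ)) / ((n : ℝ) + 1) := by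
  have hlog (x : ℝ) : Real.log (1 - x) = Real.log (x - 1) := by
    rw [← neg_sub, Real.log_neg_eq_log]
  simp only [hlog, mul_neg, intervalIntegral.integral_neg, integral_zero_one_pow_mul_log_sub,
    one_pow, sub_self, Real.log_one, Real.log_zero, mul_zero, add_zero, zero_sub, neg_div, neg_neg]

theorem integral_zero_one_pow_mul_log_one_add (n : ℕ) :
    ∫ x in (0 : ℝ)..1, x ^ n * Real.log (1 + x) =
      (-1 : ℝ) ^ n * (∑ i ∈ Finset.Icc 1 (n + 1), (-1 : ℝ) ^ i / (i : ℝ)) / ((n : ℝ) + 1) +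
        (1 + (-1 : ℝ) ^ n) * Real.log 2 / ((n : ℝ) + 1) := by
  have hsum : ∑ i ∈ Finset.Icc 1 (n + 1), (-1 : ℝ) ^ (n + 1 - i) / i =
      -((-1) ^ n * ∑ i ∈ Finset.Icc 1 (n + 1), (-1 : ℝ) ^ i / i) := by
    rw [← neg_mul, Finset.mul_sum]
    refine Finset.sum_congr rfl fun i hi => ?_
    rw [pow_sub₀ _ (by norm_num) (Finset.mem_Icc.mp hi).2, ← inv_pow, inv_neg_one]
    ring
  have hlog (x : ℝ) : Real.log (1 + x) = Real.log (x - -1) := by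
    rw [sub_neg_eq_add, add_comm]
  simp only [hlog]
  rw [integral_zero_one_pow_mul_log_sub, hsum, Real.log_neg_eq_log, Real.log_one,
    sub_neg_eq_add (1 : ℝ) 1, one_add_one_eq_two]
  ring

end LogIntegrals

/-- Mellin transforms of the weight-one harmonic polylogarithms
`H_0(x) = log x`, `H_1(x) = −log(1−x)` and `H_{−1}(x) = log(1+x)`. -/
theorem mellin_weight_one_hpl (n : ℕ) :
    (∫ x in (0 : ℝ)..1, x ^ n * Real.log x = -(1 / ((n : ℝ) + 1) ^ 2)) ∧
    (∫ x in (0 : ℝ)..1, x ^ n * (-Real.log (1 - x)) =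
      (∑ i ∈ Finset.Icc 1 (n + 1), 1 / (i : ℝ)) / ((n : ℝ) + 1)) ∧
    (∫ x in (0 : ℝ)..1, x ^ n * Real.log (1 + x) =
      (-1 : ℝ) ^ n * (∑ i ∈ Finset.Icc 1 (n + 1), (-1 : ℝ) ^ i / (i : ℝ)) / ((n : ℝ) + 1) +
        (1 + (-1 : ℝ) ^ n) * Real.log 2 / ((n : ℝ) + 1)) := by
  exact ⟨integral_zero_one_pow_mul_log n, integral_zero_one_pow_mul_neg_log_one_sub n,
    integral_zero_one_pow_mul_log_one_add n⟩
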